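/- arXiv:1312.0800 — 3 statements merged into one kernel-verified Lean document; each statement's English description precedes it below -/
import Mathlib

section
/- Gaussian integral with linear source: for every b ∈ ℝⁿ, the function x ↦ exp(−(1/2)·⟨x, Q·x⟩ + ⟨b, x⟩) is integrable on ℝⁿ, and ∫ exp(−(1/2)·⟨x, Q·x⟩ + ⟨b, x⟩) dx = (2π)^{n/2} · (det Q)^{−1/2} · exp((1/2)·⟨b, Q⁻¹·b⟩). -/
open Matrix MeasureTheory Real
open scoped RealInnerProductSpace

/-!
Write `Q = Bᵀ B` with `B` invertible and substitute `y = B x`.  Since `⟨x, Q x⟩ = ‖B x‖²` and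
`⟨b, x⟩ = ⟨w, B x⟩` for `w = B⁻ᵀ b`, the integrand becomes `exp (-‖y‖² / 2 + ⟨w, y⟩)`, a standard
Gaussian with source `w`.  The Jacobian contributes `|det B|⁻¹ = (det Q)^{-1/2}`, and
`‖w‖² = ⟨b, Q⁻¹ b⟩`.
-/

section LinearChangeOfVariables

variable {E F : Type*} [NormedAddCommGroup E] [NormedSpace ℝ E] [FiniteDimensional ℝ E]
  [MeasurableSpace E] [BorelSpace E] [NormedAddCommGroup F]

theorem measurableEmbedding_linearMap_of_det_ne_zero {f : E →ₗ[ℝ] E} (hf : f.det ≠ 0) :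
    MeasurableEmbedding f :=
  (f.equivOfDetNeZero hf).toContinuousLinearEquiv.toHomeomorph.measurableEmbedding

variable (μ : Measure E) [μ.IsAddHaarMeasure]

theorem integrable_comp_linearMap_iff {f : E →ₗ[ℝ] E} (hf : f.det ≠ 0) {g : E → F} :
    Integrable (fun x => g (f x)) μ ↔ Integrable g μ := by
  have hscale : ENNReal.ofReal |f.det⁻¹| ≠ 0 := by simpa using hf
  calc Integrable (fun x => g (f x)) μ
    _ ↔ Integrable g (μ.map f) :=
      (measurableEmbedding_linearMap_of_det_ne_zero hf).integrable_map_iff.symm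
    _ ↔ Integrable g μ := by
      rw [Measure.map_linearMap_addHaar_eq_smul_addHaar μ hf,
        integrable_smul_measure hscale ENNReal.ofReal_ne_top]

theorem integral_comp_linearMap [NormedSpace ℝ F] {f : E →ₗ[ℝ] E} (hf : f.det ≠ 0)
    (g : E → F) : ∫ x, g (f x) ∂μ = |f.det|⁻¹ • ∫ y, g y ∂μ := by
  rw [← (measurableEmbedding_linearMap_of_det_ne_zero hf).integral_map,
    Measure.map_linearMap_addHaar_eq_smul_addHaar μ hf, integral_smul_measure,
    ENNReal.toReal_ofReal (abs_nonneg _), abs_inv]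

end LinearChangeOfVariables

section IsotropicGaussian

variable {V : Type*} [NormedAddCommGroup V] [InnerProductSpace ℝ V] [FiniteDimensional ℝ V]
  [MeasurableSpace V] [BorelSpace V] {a : ℝ}

theorem integrable_exp_neg_mul_sq_norm_add_inner (ha : 0 < a) (w : V) :
    Integrable fun v : V => Real.exp (-a * ‖v‖ ^ 2 + ⟪w, v⟫) := by
  have hcomplex :=
    GaussianFourier.integrable_cexp_neg_mul_sq_norm_add (b := a) (by simpa using ha) 1 w
  refine hcomplex.re.congr (.of_forall fun v => ?_)
  simp only [RCLike.re_to_complex, one_mul]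
  exact_mod_cast Complex.exp_ofReal_re _

theorem integral_exp_neg_mul_sq_norm_add_inner (ha : 0 < a) (w : V) :
    ∫ v : V, Real.exp (-a * ‖v‖ ^ 2 + ⟪w, v⟫) =
      (π / a) ^ ((Module.finrank ℝ V : ℝ) / 2) * Real.exp (‖w‖ ^ 2 / (4 * a)) := by
  have hcomplex :=
    GaussianFourier.integral_cexp_neg_mul_sq_norm_add (b := a) (by simpa using ha) 1 w
  apply Complex.ofReal_injective
  rw [← integral_complex_ofReal, Complex.ofReal_mul, Complex.ofReal_cpow (by positivity)]
  simpa using hcomplex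

end IsotropicGaussian

section Matrix

theorem inner_toEuclideanLin_toEuclideanLin {l m n : Type*} [Fintype l] [Fintype m] [Fintype n]
    [DecidableEq l] [DecidableEq n] (A : Matrix m l ℝ) (B : Matrix m n ℝ)
    (x : EuclideanSpace ℝ l) (y : EuclideanSpace ℝ n) :
    ⟪toEuclideanLin A x, toEuclideanLin B y⟫ = x ⬝ᵥ (Aᵀ * B) *ᵥ y := by
  rw [EuclideanSpace.inner_eq_star_dotProduct, star_trivial, dotProduct_comm, ofLp_toLpLin,
    ofLp_toLpLin, toLin'_apply, toLin'_apply, ← mulVec_mulVec, dotProduct_mulVec x.ofLp,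
    vecMul_transpose]

theorem norm_toEuclideanLin_sq {m n : Type*} [Fintype m] [Fintype n] [DecidableEq n]
    (A : Matrix m n ℝ) (x : EuclideanSpace ℝ n) :
    ‖toEuclideanLin A x‖ ^ 2 = x ⬝ᵥ (Aᵀ * A) *ᵥ x := by
  rw [← real_inner_self_eq_norm_sq, inner_toEuclideanLin_toEuclideanLin]

variable {ι : Type*} [Fintype ι] [DecidableEq ι]

open scoped MatrixOrder in
theorem exists_det_ne_zero_and_eq_transpose_mul_self {Q : Matrix ι ι ℝ} (hQ : Q.PosDef) :
    ∃ B : Matrix ι ι ℝ, B.det ≠ 0 ∧ Q = Bᵀ * B := by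
  obtain ⟨B, hB, rfl⟩ :=
    CStarAlgebra.isStrictlyPositive_iff_eq_star_mul_self.mp hQ.isStrictlyPositive
  exact ⟨B, (B.isUnit_iff_isUnit_det.mp hB).ne_zero, by
    rw [star_eq_conjTranspose, conjTranspose_eq_transpose_of_trivial]⟩

theorem det_transpose_mul_self_rpow_neg_half (B : Matrix ι ι ℝ) :
    (Bᵀ * B).det ^ (-(1 / 2) : ℝ) = |B.det|⁻¹ := by
  rw [det_mul, det_transpose, Real.rpow_neg (mul_self_nonneg _), ← Real.sqrt_eq_rpow,
    Real.sqrt_mul_self_eq_abs]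

theorem gaussian_integral_with_source_general {Q : Matrix ι ι ℝ} (hQ : Q.PosDef)
    (b : EuclideanSpace ℝ ι) :
    Integrable (fun x : EuclideanSpace ℝ ι =>
        Real.exp (-(1 / 2) * (x ⬝ᵥ Q *ᵥ x) + b ⬝ᵥ x)) ∧
    ∫ x : EuclideanSpace ℝ ι, Real.exp (-(1 / 2) * (x ⬝ᵥ Q *ᵥ x) + b ⬝ᵥ x) =
      (2 * π) ^ ((Fintype.card ι : ℝ) / 2) * Q.det ^ (-(1 / 2) : ℝ) *
        Real.exp ((1 / 2) * (b ⬝ᵥ Q⁻¹ *ᵥ b)) := by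
  obtain ⟨B, hB, rfl⟩ := exists_det_ne_zero_and_eq_transpose_mul_self hQ
  have hdet : (toEuclideanLin B).det ≠ 0 := by rwa [LinearMap.det_toLpLin]
  set w := toEuclideanLin (B⁻¹)ᵀ b
  have hsource (x : EuclideanSpace ℝ ι) : b ⬝ᵥ x = ⟪w, toEuclideanLin B x⟫ := by
    rw [inner_toEuclideanLin_toEuclideanLin, transpose_transpose, nonsing_inv_mul _ hB.isUnit,
      one_mulVec]
  have hinv : b ⬝ᵥ (Bᵀ * B)⁻¹ *ᵥ b = ‖w‖ ^ 2 := by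
    rw [norm_toEuclideanLin_sq, transpose_transpose, Matrix.mul_inv_rev, transpose_nonsing_inv]
  rw [hinv]
  simp only [← norm_toEuclideanLin_sq, hsource]
  constructor
  · exact (integrable_comp_linearMap_iff volume hdet).mpr
      (integrable_exp_neg_mul_sq_norm_add_inner one_half_pos w)
  · rw [integral_comp_linearMap volume hdet fun y => Real.exp (-(1 / 2) * ‖y‖ ^ 2 + ⟪w, y⟫),
      integral_exp_neg_mul_sq_norm_add_inner one_half_pos w, LinearMap.det_toLpLin,
      finrank_euclideanSpace, det_transpose_mul_self_rpow_neg_half, smul_eq_mul]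
    ring_nf

end Matrix

/-- **Gaussian integral with linear source.**
Let `Q` be a real symmetric positive-definite `n × n` matrix.  For every `b ∈ ℝⁿ`,
the function `x ↦ exp (-(1/2)⟨x, Q·x⟩ + ⟨b, x⟩)` is integrable on `ℝⁿ` and
`∫ exp (-(1/2)⟨x, Q·x⟩ + ⟨b, x⟩) dx = (2π)^{n/2} · (det Q)^{-1/2} · exp ((1/2)⟨b, Q⁻¹·b⟩)`. -/
theorem gaussian_integral_with_source (n : ℕ) (Q : Matrix (Fin n) (Fin n) ℝ)
    (hQ : Q.PosDef) (hQsymm : Q.IsSymm) (b : EuclideanSpace ℝ (Fin n)) :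
    Integrable (fun x : EuclideanSpace ℝ (Fin n) =>
        Real.exp (-(1 / 2) * (x ⬝ᵥ Q.mulVec x) + b ⬝ᵥ x)) ∧
    ∫ x : EuclideanSpace ℝ (Fin n),
        Real.exp (-(1 / 2) * (x ⬝ᵥ Q.mulVec x) + b ⬝ᵥ x)
      = (2 * π) ^ ((n : ℝ) / 2) * Q.det ^ (-(1 / 2) : ℝ)
          * Real.exp ((1 / 2) * (b ⬝ᵥ Q⁻¹.mulVec b)) := by
  simpa only [Fintype.card_fin] using gaussian_integral_with_source_general hQ b
end

section
/- Differentiation of the source integral: the function F : ℝⁿ → ℝ defined by F(b) = ∫ exp(−(1/2)·⟨x, Q·x⟩ + ⟨b, x⟩) dx is differentiable, and for each index i its partial derivative in the i-th coordinate direction at any b ∈ ℝⁿ equals ∫ xᵢ · exp(−(1/2)·⟨x, Q·x⟩ + ⟨b, x⟩) dx; in particular the integrand x ↦ xᵢ · exp(−(1/2)·⟨x, Q·x⟩ + ⟨b, x⟩) is integrable for every b. -/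
open Matrix MeasureTheory Real

/-!
A positive-definite form on a finite-dimensional space is coercive, so the Gaussian weight
`exp (-(1/2) B(x, x))` absorbs every exponential `exp (R‖x‖)`. A factor `x` brought down by
differentiating `exp ⟪b, x⟫` costs only a slightly larger `R`, since `δ‖x‖ ≤ exp (δ‖x‖)`; for `b`
in a ball the differentiated integrand is thus dominated by a single integrable function.
-/

section Coercivity

variable {E : Type*} [NormedAddCommGroup E] [NormedSpace ℝ E] [ProperSpace E]

theorem isCoercive_of_forall_pos {B : E →L[ℝ] E →L[ℝ] ℝ} (hB : ∀ x ≠ 0, 0 < B x x) :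
    IsCoercive B := by
  obtain ⟨c, hc, hle⟩ := (isCompact_sphere (0 : E) 1).exists_forall_le'
    (f := fun x => B x x) (by fun_prop)
    fun x hx => hB x (ne_zero_of_mem_unit_sphere ⟨x, hx⟩)
  refine ⟨c, hc, fun x => ?_⟩
  rcases eq_or_ne x 0 with rfl | hx
  · simp
  have hx' : 0 < ‖x‖ := norm_pos_iff.mpr hx
  have hunit : c ≤ B (‖x‖⁻¹ • x) (‖x‖⁻¹ • x) := hle _ (by simp [norm_smul, hx'.ne'])
  calc c * ‖x‖ * ‖x‖ ≤ B (‖x‖⁻¹ • x) (‖x‖⁻¹ • x) * ‖x‖ * ‖x‖ := by gcongr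
    _ = B x x := by
      simp only [map_smul, _root_.smul_apply, smul_eq_mul]
      field_simp

end Coercivity

open scoped RealInnerProductSpace

section DominatedDifferentiation

variable {E Ω : Type*} [NormedAddCommGroup E] [InnerProductSpace ℝ E]

theorem exp_add_inner_le {b : E} {R : ℝ} (hb : ‖b‖ ≤ R) (s : ℝ) (x : E) :
    exp (s + ⟪b, x⟫) ≤ exp (s + R * ‖x‖) := by
  gcongr
  exact (real_inner_le_norm b x).trans (by gcongr)

theorem norm_mul_exp_add_inner_le {b : E} {r R : ℝ} (hb : ‖b‖ ≤ r) (hr : r < R) (s : ℝ) (x : E) :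
    ‖x‖ * exp (s + ⟪b, x⟫) ≤ (R - r)⁻¹ * exp (s + R * ‖x‖) := by
  have hδ : 0 < R - r := sub_pos.mpr hr
  have hx : (R - r) * ‖x‖ ≤ exp ((R - r) * ‖x‖) := by
    linarith [add_one_le_exp ((R - r) * ‖x‖)]
  rw [le_inv_mul_iff₀ hδ, ← mul_assoc]
  calc (R - r) * ‖x‖ * exp (s + ⟪b, x⟫)
      ≤ exp ((R - r) * ‖x‖) * exp (s + r * ‖x‖) := by
        gcongr ?_ * ?_
        exact exp_add_inner_le hb s x
    _ = exp (s + R * ‖x‖) := by rw [← exp_add]; ring_nf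

theorem norm_exp_add_inner_smul_innerSL_le {b : E} {r : ℝ} (hb : ‖b‖ ≤ r) (hr : r < R)
    (s : ℝ) (x : E) :
    ‖exp (s + ⟪b, x⟫) • innerSL ℝ x‖ ≤ (R - r)⁻¹ * exp (s + R * ‖x‖) := by
  rw [norm_smul, innerSL_apply_norm, norm_eq_abs, abs_exp, mul_comm]
  exact norm_mul_exp_add_inner_le hb hr s x

theorem hasFDerivAt_exp_add_inner (s : ℝ) (x b : E) :
    HasFDerivAt (fun b : E => exp (s + ⟪b, x⟫)) (exp (s + ⟪b, x⟫) • innerSL ℝ x) b := by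
  have hinner : (fun b : E => ⟪b, x⟫) = innerSL ℝ x := funext fun b => real_inner_comm x b
  have hlinear : HasFDerivAt (fun b : E => ⟪b, x⟫) (innerSL ℝ x) b :=
    hinner ▸ (innerSL ℝ x).hasFDerivAt
  exact (hlinear.const_add s).exp

variable [MeasurableSpace Ω] {μ : Measure Ω} {S : Ω → ℝ} {X : Ω → E} {R : ℝ}

theorem aestronglyMeasurable_exp_add_inner (hS : AEStronglyMeasurable S μ)
    (hX : AEStronglyMeasurable X μ) (b : E) :
    AEStronglyMeasurable (fun ω => exp (S ω + ⟪b, X ω⟫)) μ :=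
  continuous_exp.comp_aestronglyMeasurable (hS.add (hX.const_inner (𝕜 := ℝ)))

theorem integrable_exp_add_inner (hS : AEStronglyMeasurable S μ)
    (hX : AEStronglyMeasurable X μ) (hint : Integrable (fun ω => exp (S ω + R * ‖X ω‖)) μ)
    {b : E} (hb : ‖b‖ ≤ R) :
    Integrable (fun ω => exp (S ω + ⟪b, X ω⟫)) μ :=
  hint.mono' (aestronglyMeasurable_exp_add_inner hS hX b) <| .of_forall fun ω => by
    simpa only [norm_eq_abs, abs_exp] using exp_add_inner_le hb (S ω) (X ω)

theorem integrable_exp_add_inner_smul_innerSL (hS : AEStronglyMeasurable S μ)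
    (hX : AEStronglyMeasurable X μ) (hint : Integrable (fun ω => exp (S ω + R * ‖X ω‖)) μ)
    {b : E} (hb : ‖b‖ < R) :
    Integrable (fun ω => exp (S ω + ⟪b, X ω⟫) • innerSL ℝ (X ω)) μ :=
  (hint.const_mul (R - ‖b‖)⁻¹).mono'
    ((aestronglyMeasurable_exp_add_inner hS hX b).smul
      ((innerSL ℝ).continuous.comp_aestronglyMeasurable hX))
    (.of_forall fun ω => norm_exp_add_inner_smul_innerSL_le le_rfl hb (S ω) (X ω))

theorem hasFDerivAt_integral_exp_add_inner (hS : AEStronglyMeasurable S μ)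
    (hX : AEStronglyMeasurable X μ) (hint : Integrable (fun ω => exp (S ω + R * ‖X ω‖)) μ)
    {b : E} (hb : ‖b‖ < R) :
    HasFDerivAt (fun b : E => ∫ ω, exp (S ω + ⟪b, X ω⟫) ∂μ)
      (∫ ω, exp (S ω + ⟪b, X ω⟫) • innerSL ℝ (X ω) ∂μ) b := by
  obtain ⟨r, hbr, hrR⟩ := exists_between hb
  have hball : Metric.ball (0 : E) r ∈ nhds b :=
    Metric.isOpen_ball.mem_nhds (mem_ball_zero_iff.mpr hbr)
  refine hasFDerivAt_integral_of_dominated_of_fderiv_le hball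
    (.of_forall (aestronglyMeasurable_exp_add_inner hS hX))
    (integrable_exp_add_inner hS hX hint hb.le)
    (integrable_exp_add_inner_smul_innerSL hS hX hint hb).aestronglyMeasurable
    (.of_forall fun ω b' hb' => ?_) (hint.const_mul (R - r)⁻¹)
    (.of_forall fun ω b' _ => hasFDerivAt_exp_add_inner (S ω) (X ω) b')
  exact norm_exp_add_inner_smul_innerSL_le (mem_ball_zero_iff.mp hb').le hrR (S ω) (X ω)

end DominatedDifferentiation

section Gaussian

variable {E : Type*} [NormedAddCommGroup E] [InnerProductSpace ℝ E] [FiniteDimensional ℝ E]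
  [MeasurableSpace E] [BorelSpace E]

theorem integrable_exp_neg_mul_sq_norm {c : ℝ} (hc : 0 < c) :
    Integrable (fun x : E => exp (-c * ‖x‖ ^ 2)) := by
  have hcexp := GaussianFourier.integrable_cexp_neg_mul_sq_norm_add (V := E) (b := c)
    (by simpa using hc) 0 0
  refine hcexp.norm.congr (.of_forall fun x => ?_)
  simp only [zero_mul, add_zero, Complex.norm_exp]
  norm_cast

theorem integrable_exp_neg_mul_add_of_isCoercive {B : E →L[ℝ] E →L[ℝ] ℝ} (hB : IsCoercive B)
    {a : ℝ} (ha : 0 < a) (R : ℝ) :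
    Integrable (fun x : E => exp (-a * B x x + R * ‖x‖)) := by
  obtain ⟨c, hc, hle⟩ := hB
  refine ((integrable_exp_neg_mul_sq_norm (E := E) (c := a * c / 2) (by positivity)).const_mul
    (exp (R ^ 2 / (2 * (a * c))))).mono' (by fun_prop) (.of_forall fun x => ?_)
  have hsquare : R * ‖x‖ ≤ R ^ 2 / (2 * (a * c)) + a * c / 2 * ‖x‖ ^ 2 := by
    have : R ^ 2 / (2 * (a * c)) + a * c / 2 * ‖x‖ ^ 2 - R * ‖x‖
        = (R - a * c * ‖x‖) ^ 2 / (2 * (a * c)) := by field_simp; ring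
    rw [← sub_nonneg, this]
    positivity
  have hcoercive : a * (c * ‖x‖ * ‖x‖) ≤ a * B x x := by gcongr; exact hle x
  rw [norm_eq_abs, abs_exp, ← exp_add, exp_le_exp]
  linarith

theorem gaussian_source_integral_differentiable_general {B : E →L[ℝ] E →L[ℝ] ℝ}
    (hB : ∀ x ≠ 0, 0 < B x x) :
    Differentiable ℝ (fun b : E => ∫ x : E, exp (-(1 / 2) * B x x + ⟪b, x⟫)) ∧
    ∀ v b : E,
      Integrable (fun x : E => ⟪v, x⟫ * exp (-(1 / 2) * B x x + ⟪b, x⟫)) ∧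
      fderiv ℝ (fun b : E => ∫ x : E, exp (-(1 / 2) * B x x + ⟪b, x⟫)) b v
        = ∫ x : E, ⟪v, x⟫ * exp (-(1 / 2) * B x x + ⟪b, x⟫) := by
  have hS : AEStronglyMeasurable (fun x : E => -(1 / 2) * B x x) := by fun_prop
  have hX : AEStronglyMeasurable (fun x : E => x) := by fun_prop
  have hexp (b : E) := integrable_exp_neg_mul_add_of_isCoercive (isCoercive_of_forall_pos hB)
    one_half_pos (‖b‖ + 1)
  have hderiv (b : E) := hasFDerivAt_integral_exp_add_inner hS hX (hexp b) (lt_add_one ‖b‖)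
  refine ⟨fun b => (hderiv b).differentiableAt, fun v b => ?_⟩
  have hint := integrable_exp_add_inner_smul_innerSL hS hX (hexp b) (lt_add_one ‖b‖)
  have happly (x : E) : (exp (-(1 / 2) * B x x + ⟪b, x⟫) • innerSL ℝ x) v
      = ⟪v, x⟫ * exp (-(1 / 2) * B x x + ⟪b, x⟫) := by
    simp [real_inner_comm, mul_comm]
  constructor
  · simpa only [happly] using hint.apply_continuousLinearMap v
  · rw [(hderiv b).fderiv, ContinuousLinearMap.integral_apply hint]
    simp only [happly]

end Gaussian

section Matrix

variable {ι : Type*} [Fintype ι]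

theorem real_inner_eq_dotProduct (b x : EuclideanSpace ℝ ι) : ⟪b, x⟫ = b ⬝ᵥ x := by
  simp [EuclideanSpace.inner_eq_star_dotProduct, dotProduct_comm]

variable [DecidableEq ι]

/-- The bilinear form `(x, y) ↦ ⟪Q x, y⟫` of a real matrix on Euclidean space, through which the
matrix statement becomes an instance of the coordinate-free one. -/
noncomputable def matrixBilin (Q : Matrix ι ι ℝ) :
    EuclideanSpace ℝ ι →L[ℝ] EuclideanSpace ℝ ι →L[ℝ] ℝ :=
  innerSL ℝ ∘L toEuclideanCLM (𝕜 := ℝ) Q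

theorem matrixBilin_self (Q : Matrix ι ι ℝ) (x : EuclideanSpace ℝ ι) :
    matrixBilin Q x x = x ⬝ᵥ Q.mulVec x :=
  calc matrixBilin Q x x = ⟪toEuclideanCLM (𝕜 := ℝ) Q x, x⟫ := rfl
    _ = x ⬝ᵥ Q.mulVec x := by
      rw [real_inner_eq_dotProduct, ofLp_toEuclideanCLM, dotProduct_comm]

theorem matrixBilin_self_pos {Q : Matrix ι ι ℝ} (hQ : Q.PosDef) (x : EuclideanSpace ℝ ι)
    (hx : x ≠ 0) : 0 < matrixBilin Q x x := by
  have hx' : x.ofLp ≠ 0 := (WithLp.ofLp_eq_zero 2).not.mpr hx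
  simpa [matrixBilin_self] using hQ.dotProduct_mulVec_pos hx'

end Matrix

/-- **Differentiation of the source integral.**
Let `Q` be a real symmetric positive-definite `n × n` matrix and let
`F b = ∫ exp (-(1/2)⟨x, Q·x⟩ + ⟨b, x⟩) dx`.  Then `F` is differentiable, and for each
index `i` and each `b` the integrand `x ↦ xᵢ · exp (-(1/2)⟨x, Q·x⟩ + ⟨b, x⟩)` is
integrable and the partial derivative of `F` at `b` in the `i`-th coordinate direction
equals `∫ xᵢ · exp (-(1/2)⟨x, Q·x⟩ + ⟨b, x⟩) dx`. -/
theorem gaussian_source_integral_differentiable (n : ℕ) (Q : Matrix (Fin n) (Fin n) ℝ)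
    (hQ : Q.PosDef) (hQsymm : Q.IsSymm) :
    Differentiable ℝ (fun b : EuclideanSpace ℝ (Fin n) =>
        ∫ x : EuclideanSpace ℝ (Fin n),
          Real.exp (-(1 / 2) * (x ⬝ᵥ Q.mulVec x) + b ⬝ᵥ x)) ∧
    ∀ (i : Fin n) (b : EuclideanSpace ℝ (Fin n)),
      Integrable (fun x : EuclideanSpace ℝ (Fin n) =>
          x i * Real.exp (-(1 / 2) * (x ⬝ᵥ Q.mulVec x) + b ⬝ᵥ x)) ∧
      fderiv ℝ (fun b : EuclideanSpace ℝ (Fin n) =>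
            ∫ x : EuclideanSpace ℝ (Fin n),
              Real.exp (-(1 / 2) * (x ⬝ᵥ Q.mulVec x) + b ⬝ᵥ x))
          b (EuclideanSpace.single i 1)
        = ∫ x : EuclideanSpace ℝ (Fin n),
            x i * Real.exp (-(1 / 2) * (x ⬝ᵥ Q.mulVec x) + b ⬝ᵥ x) := by
  have hgeneral := gaussian_source_integral_differentiable_general (matrixBilin_self_pos hQ)
  simp only [matrixBilin_self, real_inner_eq_dotProduct] at hgeneral
  exact ⟨hgeneral.1, fun i b => by simpa using hgeneral.2 (EuclideanSpace.single i 1) b⟩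
end

section
/- Gaussian two-point function (the propagator): for all indices i, j, ∫ xᵢ·xⱼ·exp(−(1/2)·⟨x, Q·x⟩) dx = (2π)^{n/2} · (det Q)^{−1/2} · (Q⁻¹)ᵢⱼ. -/
open Matrix MeasureTheory Real

/-!
The probability measure with density proportional to `exp (-(1/2)⟨x, Q·x⟩)` is the centred Gaussian
with covariance matrix `Q⁻¹`, so the integral is the normalising constant of this density times a
covariance. The density is obtained from that of the standard Gaussian, which is identified by its
characteristic function, through the substitution `x = Q^{-1/2}·y`.
-/

theorem integral_comp_continuousLinearMap {E F : Type*} [NormedAddCommGroup E] [NormedSpace ℝ E]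
    [FiniteDimensional ℝ E] [MeasurableSpace E] [BorelSpace E] [NormedAddCommGroup F]
    [NormedSpace ℝ F] (μ : Measure E) [μ.IsAddHaarMeasure] {L : E →L[ℝ] E} (hL : L.det ≠ 0)
    (f : E → F) :
    ∫ x, f (L x) ∂μ = |L.det|⁻¹ • ∫ x, f x ∂μ := by
  have hemb : MeasurableEmbedding L :=
    (L.toContinuousLinearEquivOfDetNeZero hL).toHomeomorph.measurableEmbedding
  have hmap : μ.map L = ENNReal.ofReal |L.det⁻¹| • μ :=
    Measure.map_linearMap_addHaar_eq_smul_addHaar μ (f := L.toLinearMap) hL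
  rw [← hemb.integral_map, hmap, integral_smul_measure, ENNReal.toReal_ofReal (abs_nonneg _),
    abs_inv]

section StdGaussian

open ProbabilityTheory Module

variable {E F : Type*} [NormedAddCommGroup E] [InnerProductSpace ℝ E] [FiniteDimensional ℝ E]
  [MeasurableSpace E] [BorelSpace E] [NormedAddCommGroup F] [NormedSpace ℝ F]

theorem integrable_rexp_neg_mul_sq_norm {b : ℝ} (hb : 0 < b) :
    Integrable fun x : E ↦ exp (-b * ‖x‖ ^ 2) := by
  refine .of_integral_ne_zero ?_
  rw [GaussianFourier.integral_rexp_neg_mul_sq_norm hb]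
  positivity

theorem stdGaussian_eq_withDensity :
    stdGaussian E = volume.withDensity fun x ↦
      .ofReal ((2 * π) ^ (-(finrank ℝ E / 2) : ℝ) * exp (-(1 / 2) * ‖x‖ ^ 2)) := by
  set c : ℝ := (2 * π) ^ (-(finrank ℝ E / 2) : ℝ) with hc
  have hint : Integrable fun x : E ↦ c * exp (-(1 / 2) * ‖x‖ ^ 2) :=
    (integrable_rexp_neg_mul_sq_norm one_half_pos).const_mul c
  have := isFiniteMeasure_withDensity_ofReal hint.2
  refine Measure.ext_of_charFun (funext fun t ↦ ?_)
  have hintegrand (x : E) :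
      (ENNReal.ofReal (c * exp (-(1 / 2) * ‖x‖ ^ 2))).toReal • Complex.exp (inner ℝ x t * .I) =
        c * Complex.exp (-(1 / 2 : ℂ) * ‖x‖ ^ 2 + .I * inner ℝ t x) := by
    rw [ENNReal.toReal_ofReal (by positivity), Complex.real_smul, Complex.ofReal_mul, mul_assoc,
      Complex.ofReal_exp, ← Complex.exp_add, real_inner_comm, mul_comm Complex.I]
    norm_num
  have hnorm : (c : ℂ) * (π / (1 / 2 : ℂ)) ^ (finrank ℝ E / 2 : ℂ) = 1 := by
    have h : c * (π / (1 / 2)) ^ (finrank ℝ E / 2 : ℝ) = 1 := by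
      rw [hc, div_div_eq_mul_div, div_one, mul_comm π, rpow_neg (by positivity),
        inv_mul_cancel₀ (by positivity)]
    rw [← Complex.ofReal_inj, Complex.ofReal_mul,
      Complex.ofReal_cpow (by positivity : 0 ≤ π / (1 / 2))] at h
    push_cast at h
    exact h
  rw [charFun_stdGaussian, charFun_apply,
    integral_withDensity_eq_integral_toReal_smul (by fun_prop) (by simp)]
  simp_rw [hintegrand]
  rw [integral_const_mul, GaussianFourier.integral_cexp_neg_mul_sq_norm_add (by norm_num),
    ← mul_assoc, hnorm, one_mul, Complex.I_sq]
  congr 1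
  ring

theorem integral_stdGaussian (f : E → F) :
    ∫ x, f x ∂stdGaussian E =
      (2 * π) ^ (-(finrank ℝ E / 2) : ℝ) • ∫ x, exp (-(1 / 2) * ‖x‖ ^ 2) • f x := by
  rw [stdGaussian_eq_withDensity,
    integral_withDensity_eq_integral_toReal_smul (by fun_prop) (by simp), ← integral_smul]
  congr with x
  rw [ENNReal.toReal_ofReal (by positivity), mul_smul]

end StdGaussian

section MultivariateGaussian

open ProbabilityTheory
open scoped MatrixOrder

variable {ι : Type*} [Fintype ι] [DecidableEq ι] {S : Matrix ι ι ℝ}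

theorem det_toEuclideanCLM {𝕜 : Type*} [RCLike 𝕜] (A : Matrix ι ι 𝕜) :
    (toEuclideanCLM (𝕜 := 𝕜) A).det = A.det :=
  LinearMap.det_toLpLin 2 A

theorem det_sqrt_pos (hS : S.PosDef) : 0 < (CFC.sqrt S).det := by
  rw [hS.posSemidef.det_sqrt, RCLike.sqrt_real]
  exact sqrt_pos.2 hS.det_pos

theorem dotProduct_inv_mulVec_sqrt (hS : S.PosDef) (x : EuclideanSpace ℝ ι) :
    CFC.sqrt S *ᵥ x ⬝ᵥ S⁻¹ *ᵥ CFC.sqrt S *ᵥ x = ‖x‖ ^ 2 := by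
  have hsymm : (CFC.sqrt S)ᵀ = CFC.sqrt S := (CFC.sqrt_nonneg S).posSemidef.isHermitian
  have hunit : IsUnit (CFC.sqrt S).det := (det_sqrt_pos hS).ne'.isUnit
  have hcancel : CFC.sqrt S * (S⁻¹ * CFC.sqrt S) = 1 := by
    nth_rw 2 [← CFC.sqrt_mul_sqrt_self S hS.posSemidef.nonneg]
    rw [Matrix.mul_inv_rev, nonsing_inv_mul_cancel_right _ _ hunit, mul_nonsing_inv _ hunit]
  rw [mulVec_mulVec, ← vecMul_transpose, hsymm, ← dotProduct_mulVec, mulVec_mulVec, hcancel,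
    one_mulVec, EuclideanSpace.real_norm_sq_eq]
  simp [dotProduct, sq]

theorem integral_multivariateGaussian {F : Type*} [NormedAddCommGroup F] [NormedSpace ℝ F]
    (hS : S.PosDef) (m : EuclideanSpace ℝ ι) (f : EuclideanSpace ℝ ι → F) :
    ∫ x, f x ∂multivariateGaussian m S =
      ((2 * π) ^ (-(Fintype.card ι / 2) : ℝ) * S.det ^ (-(1 / 2) : ℝ)) •
        ∫ x, exp (-(1 / 2) * ((x - m).ofLp ⬝ᵥ S⁻¹ *ᵥ (x - m).ofLp)) • f x := by
  set L := toEuclideanCLM (𝕜 := ℝ) (CFC.sqrt S)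
  have hdet : L.det = S.det ^ (1 / 2 : ℝ) := by
    rw [det_toEuclideanCLM, hS.posSemidef.det_sqrt, RCLike.sqrt_real, sqrt_eq_rpow]
  have hdet_pos : 0 < L.det := hdet ▸ rpow_pos_of_pos hS.det_pos _
  have hemb : MeasurableEmbedding fun x ↦ m + L x :=
    ((L.toContinuousLinearEquivOfDetNeZero hdet_pos.ne').toHomeomorph.trans
      (.addLeft m)).measurableEmbedding
  let g (x : EuclideanSpace ℝ ι) : F :=
    exp (-(1 / 2) * (x.ofLp ⬝ᵥ S⁻¹ *ᵥ x.ofLp)) • f (m + x)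
  calc ∫ x, f x ∂multivariateGaussian m S
    _ = ∫ y, f (m + L y) ∂stdGaussian (EuclideanSpace ℝ ι) := hemb.integral_map f
    _ = (2 * π) ^ (-(Fintype.card ι / 2) : ℝ) • ∫ y, g (L y) := by
      simp only [integral_stdGaussian, finrank_euclideanSpace, g, L, ofLp_toEuclideanCLM,
        dotProduct_inv_mulVec_sqrt hS]
    _ = ((2 * π) ^ (-(Fintype.card ι / 2) : ℝ) * S.det ^ (-(1 / 2) : ℝ)) • ∫ x, g x := by
      rw [integral_comp_continuousLinearMap _ hdet_pos.ne', abs_of_pos hdet_pos, smul_smul, hdet,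
        rpow_neg hS.det_pos.le]
    _ = _ := by
      rw [← integral_sub_right_eq_self g m]
      simp only [g, add_sub_cancel]

theorem integral_eval_multivariateGaussian (m : EuclideanSpace ℝ ι) (i : ι) :
    ∫ x, x i ∂multivariateGaussian m S = m i := by
  have h := (EuclideanSpace.proj (𝕜 := ℝ) i).integral_comp_comm
    (IsGaussian.integrable_fun_id (μ := multivariateGaussian m S))
  simpa using h

theorem integral_eval_mul_eval_multivariateGaussian (hS : S.PosSemidef) (m : EuclideanSpace ℝ ι)
    (i j : ι) :
    ∫ x, x i * x j ∂multivariateGaussian m S = S i j + m i * m j := by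
  have hL2 (k : ι) : MemLp (fun x ↦ x k) 2 (multivariateGaussian m S) :=
    (EuclideanSpace.proj (𝕜 := ℝ) k).comp_memLp' IsGaussian.memLp_two_id
  have h := covariance_eq_sub (hL2 i) (hL2 j)
  rw [covariance_eval_multivariateGaussian hS, integral_eval_multivariateGaussian,
    integral_eval_multivariateGaussian] at h
  exact sub_eq_iff_eq_add.1 h.symm

end MultivariateGaussian

theorem gaussian_two_point_function_general {ι : Type*} [Fintype ι] [DecidableEq ι]
    {Q : Matrix ι ι ℝ} (hQ : Q.PosDef) (i j : ι) :
    ∫ x : EuclideanSpace ℝ ι, x i * x j * exp (-(1 / 2) * (x ⬝ᵥ Q *ᵥ x)) =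
      (2 * π) ^ ((Fintype.card ι : ℝ) / 2) * Q.det ^ (-(1 / 2) : ℝ) * Q⁻¹ i j := by
  have hdet : 0 < Q.det := hQ.det_pos
  have hmoment := integral_multivariateGaussian hQ.inv 0 fun x ↦ x i * x j
  rw [integral_eval_mul_eval_multivariateGaussian hQ.inv.posSemidef,
    nonsing_inv_nonsing_inv _ hdet.ne'.isUnit, det_nonsing_inv, Ring.inverse_eq_inv',
    inv_rpow hdet.le, rpow_neg (by positivity : 0 ≤ 2 * π)] at hmoment
  simp only [PiLp.zero_apply, mul_zero, add_zero, sub_zero, smul_eq_mul, mul_comm (exp _)]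
    at hmoment
  have hD : Q.det ^ (-(1 / 2) : ℝ) ≠ 0 := by positivity
  have hP : (2 * π) ^ ((Fintype.card ι : ℝ) / 2) ≠ 0 := by positivity
  rw [hmoment, ← mul_inv, mul_inv_cancel_left₀ (mul_ne_zero hP hD)]

/-- **Gaussian two-point function (the propagator).**
Let `Q` be a real symmetric positive-definite `n × n` matrix.  For all indices `i, j`:
`∫ xᵢ·xⱼ·exp (-(1/2)⟨x, Q·x⟩) dx = (2π)^{n/2} · (det Q)^{-1/2} · (Q⁻¹)ᵢⱼ`. -/
theorem gaussian_two_point_function (n : ℕ) (Q : Matrix (Fin n) (Fin n) ℝ)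
    (hQ : Q.PosDef) (hQsymm : Q.IsSymm) (i j : Fin n) :
    ∫ x : EuclideanSpace ℝ (Fin n),
        x i * x j * Real.exp (-(1 / 2) * (x ⬝ᵥ Q.mulVec x))
      = (2 * π) ^ ((n : ℝ) / 2) * Q.det ^ (-(1 / 2) : ℝ) * Q⁻¹ i j := by
  simpa using gaussian_two_point_function_general hQ i j
end
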